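/- Assume the network data of the context with α_i = 0 and β_ij = 0, and suppose that for every i ∈ {1,…,N} and every k ∈ I the block LMI (18) holds: the symmetric block matrix with block rows [Q̄_i^k, ⋆, ⋆, ⋆], [N_i^k, −γ²I, ⋆, ⋆], [S_i^k, 0, −γ²I, ⋆], [(Ξ_i^k)', 0, 0, −Z_i^k] is negative definite, where Q̄_i^k = X_i^k(A + δ_i I − B₂(D_i^k)'(E_i^k)^{-1}C_i^k) + (A + δ_i I − B₂(D_i^k)'(E_i^k)^{-1}C_i^k)'X_i^k + (p_i^k + q_i^k)I + Σ_{l=1}^M λ_kl X_i^l − γ²(C_i^k)'(E_i^k)^{-1}C_i^k − γ² Σ_{j∈V_i^k} H_ij'F_ij^{-1}H_ij. Define the gains K_ij^k = γ²(X_i^k)^{-1} H_ij' F_ij^{-1} and L_i^k = [ γ²(X_i^k)^{-1}(C_i^k)' + B₂(D_i^k)' ] (E_i^k)^{-1}, and set ε = min_{i,k} 2δ_i/(q_i^k + 1). Then for every k ∈ I and all vectors e_1,…,e_N ∈ ℝ^n, ξ ∈ ℝ^l, ξ_i ∈ ℝ^{l_i}, w_ij ∈ ℝ^{s_ij} (j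 ∈ V_i^k): N·Ψ^k(e) + Σ_{i=1}^N [ Σ_{l=1}^M λ_kl e_i' X_i^l e_i + 2 e_i' X_i^k f_i ] ≤ −ε Σ_{i=1}^N e_i' X_i^k e_i + γ² Σ_{i=1}^N ( ‖ξ‖² + ‖ξ_i‖² + Σ_{j∈V_i^k} ‖w_ij‖² ), where f_i = (A − L_i^k C_i^k) e_i + Σ_{j∈V_i^k} K_ij^k ( H_ij (e_j − e_i) − G_ij w_ij ) + (B₂ − L_i^k D_i^k) ξ − L_i^k D̄_i^k ξ_i, and Ψ^k(e) = (1/N) Σ_{i=1}^N Σ_{j∈V_i^k} ‖e_j − e_i‖². -/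

import Mathlib

open Matrix Finset

noncomputable section

/-- The data of the switching sensor network (special case with exactly known
estimator dynamics, i.e. `α_i = 0`, `β_ij = 0`). -/
structure NetData (n N M l : ℕ) where
  A : Matrix (Fin n) (Fin n) ℝ
  B2 : Matrix (Fin n) (Fin l) ℝ
  r : Fin N → ℕ
  li : Fin N → ℕ
  rr : Fin N → Fin N → ℕ
  ss : Fin N → Fin N → ℕ
  V : Fin N → Fin M → Finset (Fin N)
  C : (i : Fin N) → Fin M → Matrix (Fin (r i)) (Fin n) ℝ
  D : (i : Fin N) → Fin M → Matrix (Fin (r i)) (Fin l) ℝ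
  Dbar : (i : Fin N) → Fin M → Matrix (Fin (r i)) (Fin (li i)) ℝ
  H : (i j : Fin N) → Matrix (Fin (rr i j)) (Fin n) ℝ
  G : (i j : Fin N) → Matrix (Fin (rr i j)) (Fin (ss i j)) ℝ
  Lam : Matrix (Fin M) (Fin M) ℝ

namespace NetData

variable {n N M l : ℕ} (nd : NetData n N M l)

/-- `E_i^k = D_i^k (D_i^k)' + D̄_i^k (D̄_i^k)'`. -/
def E (i : Fin N) (k : Fin M) : Matrix (Fin (nd.r i)) (Fin (nd.r i)) ℝ :=
  nd.D i k * (nd.D i k)ᵀ + nd.Dbar i k * (nd.Dbar i k)ᵀ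

/-- `F_ij = G_ij G_ij'`. -/
def F (i j : Fin N) : Matrix (Fin (nd.rr i j)) (Fin (nd.rr i j)) ℝ :=
  nd.G i j * (nd.G i j)ᵀ

/-- In-degree `p_i^k = |V_i^k|`. -/
def pdeg (i : Fin N) (k : Fin M) : ℕ := (nd.V i k).card

/-- Out-degree `q_i^k = |{j : i ∈ V_j^k}|`. -/
def qdeg (i : Fin N) (k : Fin M) : ℕ :=
  (Finset.univ.filter fun j => i ∈ nd.V j k).card

variable (γ : ℝ) (δ : Fin N → ℝ)
  (X : Fin N → Fin M → Matrix (Fin n) (Fin n) ℝ)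

/-- The block `Q̄_i^k` of the LMI (18). -/
def Qbarblk (i : Fin N) (k : Fin M) : Matrix (Fin n) (Fin n) ℝ :=
  X i k * (nd.A + δ i • 1 - nd.B2 * (nd.D i k)ᵀ * (nd.E i k)⁻¹ * nd.C i k)
  + (nd.A + δ i • 1 - nd.B2 * (nd.D i k)ᵀ * (nd.E i k)⁻¹ * nd.C i k)ᵀ * X i k
  + (((nd.pdeg i k : ℝ) + (nd.qdeg i k : ℝ))) • 1
  + ∑ l', nd.Lam k l' • X i l'
  - γ ^ 2 • ((nd.C i k)ᵀ * (nd.E i k)⁻¹ * nd.C i k)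
  - γ ^ 2 • ∑ j ∈ nd.V i k, (nd.H i j)ᵀ * (nd.F i j)⁻¹ * nd.H i j

/-- The block `N_i^k`. -/
def Nblk (i : Fin N) (k : Fin M) : Matrix (Fin l) (Fin n) ℝ :=
  (1 - (nd.D i k)ᵀ * (nd.E i k)⁻¹ * nd.D i k) * nd.B2ᵀ * X i k

/-- The block `S_i^k`. -/
def Sblk (i : Fin N) (k : Fin M) : Matrix (Fin (nd.li i)) (Fin n) ℝ :=
  -((nd.Dbar i k)ᵀ * (nd.E i k)⁻¹ * nd.D i k * nd.B2ᵀ * X i k)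

/-- Entry of the block `Ξ_i^k` (horizontal concatenation of the blocks
`γ² H_ij' F_ij⁻¹ H_ij − I`, `j ∈ V_i^k`). -/
def xiBlk (i : Fin N) (k : Fin M)
    (x : Fin n) (jc : {j // j ∈ nd.V i k} × Fin n) : ℝ :=
  (γ ^ 2 • ((nd.H i jc.1.1)ᵀ * (nd.F i jc.1.1)⁻¹ * nd.H i jc.1.1)
    - (1 : Matrix (Fin n) (Fin n) ℝ)) x jc.2

/-- Index type for the rows/columns of the block matrix in the LMI (18). -/
abbrev idx (i : Fin N) (k : Fin M) : Type :=
  Fin n ⊕ (Fin l ⊕ (Fin (nd.li i) ⊕ ({j // j ∈ nd.V i k} × Fin n)))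

/-- The symmetric block matrix of the LMI (18), with block rows
`[Q̄, ⋆, ⋆, ⋆]`, `[N, −γ²I, ⋆, ⋆]`, `[S, 0, −γ²I, ⋆]`, `[Ξ', 0, 0, −Z]`. -/
def bigMat (i : Fin N) (k : Fin M) :
    Matrix (nd.idx i k) (nd.idx i k) ℝ :=
  Matrix.of fun a b =>
    match a, b with
    -- block row 1
    | .inl x, .inl y => nd.Qbarblk γ δ X i k x y
    | .inl x, .inr (.inl y) => (nd.Nblk X i k)ᵀ x y
    | .inl x, .inr (.inr (.inl y)) => (nd.Sblk X i k)ᵀ x y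
    | .inl x, .inr (.inr (.inr jc)) => nd.xiBlk γ i k x jc
    -- block row 2
    | .inr (.inl x), .inl y => nd.Nblk X i k x y
    | .inr (.inl x), .inr (.inl y) => if x = y then -(γ ^ 2) else 0
    | .inr (.inl _), .inr (.inr _) => 0
    -- block row 3
    | .inr (.inr (.inl x)), .inl y => nd.Sblk X i k x y
    | .inr (.inr (.inl _)), .inr (.inl _) => 0
    | .inr (.inr (.inl x)), .inr (.inr (.inl y)) => if x = y then -(γ ^ 2) else 0
    | .inr (.inr (.inl _)), .inr (.inr (.inr _)) => 0
    -- block row 4 : [Ξ', 0, 0, −Z]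
    | .inr (.inr (.inr jc)), .inl y => nd.xiBlk γ i k y jc
    | .inr (.inr (.inr _)), .inr (.inl _) => 0
    | .inr (.inr (.inr _)), .inr (.inr (.inl _)) => 0
    | .inr (.inr (.inr jc)), .inr (.inr (.inr jc')) =>
        if jc.1 = jc'.1 then
          -((2 * δ jc.1.1 / ((nd.qdeg jc.1.1 k : ℝ) + 1)) * X jc.1.1 k jc.2 jc'.2)
        else 0

/-- The interconnection gain `K_ij^k = γ² (X_i^k)⁻¹ H_ij' F_ij⁻¹`. -/
def Kgain (i j : Fin N) (k : Fin M) : Matrix (Fin n) (Fin (nd.rr i j)) ℝ :=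
  γ ^ 2 • ((X i k)⁻¹ * (nd.H i j)ᵀ * (nd.F i j)⁻¹)

/-- The innovation gain `L_i^k = [γ² (X_i^k)⁻¹ (C_i^k)' + B₂ (D_i^k)'] (E_i^k)⁻¹`. -/
def Lgain (i : Fin N) (k : Fin M) : Matrix (Fin n) (Fin (nd.r i)) ℝ :=
  (γ ^ 2 • ((X i k)⁻¹ * (nd.C i k)ᵀ) + nd.B2 * (nd.D i k)ᵀ) * (nd.E i k)⁻¹

/-- The error drift `f_i` of the (unperturbed) observer network. -/
def drift (k : Fin M) (e : Fin N → Fin n → ℝ) (ξ : Fin l → ℝ)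
    (ξl : (i : Fin N) → Fin (nd.li i) → ℝ)
    (w : (i j : Fin N) → Fin (nd.ss i j) → ℝ)
    (i : Fin N) : Fin n → ℝ :=
  (nd.A - nd.Lgain γ X i k * nd.C i k) *ᵥ e i
  + ∑ j ∈ nd.V i k,
      nd.Kgain γ X i j k *ᵥ (nd.H i j *ᵥ (e j - e i) - nd.G i j *ᵥ w i j)
  + (nd.B2 - nd.Lgain γ X i k * nd.D i k) *ᵥ ξ
  - (nd.Lgain γ X i k * nd.Dbar i k) *ᵥ ξl i

/-- The disagreement function `Ψ^k(e) = (1/N) Σ_i Σ_{j ∈ V_i^k} ‖e_j − e_i‖²`. -/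
def disagree (k : Fin M) (e : Fin N → Fin n → ℝ) : ℝ :=
  (1 / (N : ℝ)) * ∑ i, ∑ j ∈ nd.V i k, (e j - e i) ⬝ᵥ (e j - e i)

end NetData

/-!
Let `v_i = e_i' X_i^k e_i`. Each node is an `H∞` observer driven by the combined noise
`ζ = (ξ, ξ_i)`, and its gain `L_i^k` is the one for which `2 e_i' X_i^k f_i` contains
`-γ² ‖C e_i + D ξ + D̄ ξ_i‖²` in the `E⁻¹`-norm as a complete square. After the square is dropped,
`ζ` enters, apart from the term `γ² ‖ζ‖²`, only through its orthogonal projection onto the kernel of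
`[D, D̄]`. The LMI (18), evaluated at `e_i`, this projection and the errors `e_j` of the neighbours,
bounds what remains. A link `j → i` is a second instance of the same observer, with zero plant,
output matrix `H_ij`, noise `w_ij` and gain `K_ij^k`.

The decay `2 δ_j v_j` that node `j` gains from the shift `A + δ_j I` is cut into `q_j^k + 1` equal
parts. Through the blocks `Z_i^k`, each of the `q_j^k` nodes `i` listening to `j` consumes one of
them, so `2 δ_j v_j / (q_j^k + 1)` is left for `j` itself.
-/

section Algebra

variable {R : Type*} [CommRing R] {m n p : Type*} [Fintype m] [Fintype n] [Fintype p]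

theorem dotProduct_mulVec_comm_of_isSymm {A : Matrix n n R} (hA : A.IsSymm) (x y : n → R) :
    x ⬝ᵥ A *ᵥ y = y ⬝ᵥ A *ᵥ x := by
  rw [← dotProduct_transpose_mulVec, hA.eq]

theorem sumElim_dotProduct_fromBlocks_mulVec (Q : Matrix n n R) (S : Matrix p n R)
    (W : Matrix p p R) (x : n → R) (z : p → R) :
    Sum.elim x z ⬝ᵥ fromBlocks Q Sᵀ S W *ᵥ Sum.elim x z =
      x ⬝ᵥ Q *ᵥ x + 2 * (z ⬝ᵥ S *ᵥ x) + z ⬝ᵥ W *ᵥ z := by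
  simp only [fromBlocks_mulVec, Sum.elim_comp_inl, Sum.elim_comp_inr, sumElim_dotProduct_sumElim,
    dotProduct_add, dotProduct_transpose_mulVec]
  ring

variable [DecidableEq m] [DecidableEq n]

/-- The `H∞` observer gain `(c Y⁻¹ C' + B T') (T T')⁻¹` of the plant `ẋ = A x + B ζ` measured
through `C x + T ζ`, where `Y` is the matrix of the storage function and `c` the squared
attenuation level. -/
def observerGain (c : R) (Y : Matrix n n R) (B : Matrix n p R) (C : Matrix m n R)
    (T : Matrix m p R) : Matrix n m R :=
  (c • (Y⁻¹ * Cᵀ) + B * Tᵀ) * (T * Tᵀ)⁻¹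

theorem dotProduct_mulVec_observerGain_mulVec {Y : Matrix n n R} (hYs : Y.IsSymm)
    (hY : IsUnit Y.det) (c : R) (B : Matrix n p R) (C : Matrix m n R) (T : Matrix m p R)
    (x : n → R) (y : m → R) :
    x ⬝ᵥ Y *ᵥ observerGain c Y B C T *ᵥ y =
      c * (C *ᵥ x ⬝ᵥ (T * Tᵀ)⁻¹ *ᵥ y) + T *ᵥ Bᵀ *ᵥ Y *ᵥ x ⬝ᵥ (T * Tᵀ)⁻¹ *ᵥ y := by
  set y' := (T * Tᵀ)⁻¹ *ᵥ y
  have state_part : x ⬝ᵥ Y *ᵥ Y⁻¹ *ᵥ Cᵀ *ᵥ y' = C *ᵥ x ⬝ᵥ y' := by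
    rw [mulVec_mulVec, mul_nonsing_inv _ hY, one_mulVec, dotProduct_transpose_mulVec,
      dotProduct_comm]
  have noise_part : x ⬝ᵥ Y *ᵥ B *ᵥ Tᵀ *ᵥ y' = T *ᵥ Bᵀ *ᵥ Y *ᵥ x ⬝ᵥ y' := by
    rw [dotProduct_mulVec_comm_of_isSymm hYs, dotProduct_comm, ← dotProduct_transpose_mulVec,
      dotProduct_comm, ← dotProduct_transpose_mulVec, transpose_transpose, dotProduct_comm]
  rw [observerGain, ← mulVec_mulVec, add_mulVec, smul_mulVec, ← mulVec_mulVec, ← mulVec_mulVec,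
    mulVec_add, mulVec_smul, dotProduct_add, dotProduct_smul, state_part, noise_part, smul_eq_mul]

variable [DecidableEq p]

/-- The orthogonal projection onto the kernel of `T`, provided that `T * Tᵀ` is invertible (if not,
`(T * Tᵀ)⁻¹ = 0` and this is the identity). Applied to a noise vector `ζ`, it keeps the part which
the measurement noise `T *ᵥ ζ` does not see. -/
def kernelProjection (T : Matrix m p R) : Matrix p p R :=
  1 - Tᵀ * (T * Tᵀ)⁻¹ * T

theorem kernelProjection_isSymm (T : Matrix m p R) : (kernelProjection T).IsSymm := by
  have hE : (T * Tᵀ)ᵀ = T * Tᵀ := by rw [transpose_mul, transpose_transpose]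
  simp only [IsSymm, kernelProjection, transpose_sub, transpose_one, transpose_mul,
    transpose_nonsing_inv, hE, transpose_transpose, Matrix.mul_assoc]

theorem mul_kernelProjection {T : Matrix m p R} (hT : IsUnit (T * Tᵀ).det) :
    T * kernelProjection T = 0 := by
  rw [kernelProjection, Matrix.mul_sub, Matrix.mul_one, ← Matrix.mul_assoc, ← Matrix.mul_assoc,
    mul_nonsing_inv _ hT, Matrix.one_mul, sub_self]

theorem kernelProjection_mul_self {T : Matrix m p R} (hT : IsUnit (T * Tᵀ).det) :
    kernelProjection T * kernelProjection T = kernelProjection T := by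
  nth_rw 1 [kernelProjection]
  rw [Matrix.sub_mul, Matrix.one_mul, Matrix.mul_assoc, mul_kernelProjection hT, Matrix.mul_zero,
    sub_zero]

theorem kernelProjection_mulVec_dotProduct_kernelProjection_mulVec {T : Matrix m p R}
    (hT : IsUnit (T * Tᵀ).det) (z b : p → R) :
    kernelProjection T *ᵥ z ⬝ᵥ kernelProjection T *ᵥ b = z ⬝ᵥ kernelProjection T *ᵥ b := by
  rw [dotProduct_mulVec_comm_of_isSymm (kernelProjection_isSymm T), mulVec_mulVec,
    kernelProjection_mul_self hT, dotProduct_mulVec_comm_of_isSymm (kernelProjection_isSymm T)]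

theorem dotProduct_kernelProjection_mulVec (T : Matrix m p R) (z b : p → R) :
    z ⬝ᵥ kernelProjection T *ᵥ b = z ⬝ᵥ b - T *ᵥ z ⬝ᵥ (T * Tᵀ)⁻¹ *ᵥ T *ᵥ b := by
  rw [kernelProjection, sub_mulVec, one_mulVec, dotProduct_sub, ← mulVec_mulVec, ← mulVec_mulVec,
    dotProduct_transpose_mulVec, dotProduct_comm (T *ᵥ z)]

theorem observer_completion_of_squares {Y : Matrix n n R} (hYs : Y.IsSymm) (hY : IsUnit Y.det)
    (c : R) (A : Matrix n n R) (B : Matrix n p R) (C : Matrix m n R) {T : Matrix m p R}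
    (hT : IsUnit (T * Tᵀ).det) (x : n → R) (ζ : p → R) :
    2 * (x ⬝ᵥ Y *ᵥ ((A - observerGain c Y B C T * C) *ᵥ x
        + (B - observerGain c Y B C T * T) *ᵥ ζ)) =
      2 * (x ⬝ᵥ Y *ᵥ (A - B * Tᵀ * (T * Tᵀ)⁻¹ * C) *ᵥ x)
        - c * (C *ᵥ x ⬝ᵥ (T * Tᵀ)⁻¹ *ᵥ C *ᵥ x)
        + 2 * (kernelProjection T *ᵥ ζ ⬝ᵥ (kernelProjection T * Bᵀ * Y) *ᵥ x)
        - c * (kernelProjection T *ᵥ ζ ⬝ᵥ kernelProjection T *ᵥ ζ) + c * (ζ ⬝ᵥ ζ)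
        - c * ((C *ᵥ x + T *ᵥ ζ) ⬝ᵥ (T * Tᵀ)⁻¹ *ᵥ (C *ᵥ x + T *ᵥ ζ)) := by
  have hPs : (T * Tᵀ)⁻¹.IsSymm := IsSymm.inv (by rw [IsSymm, transpose_mul, transpose_transpose])
  have plant_noise : x ⬝ᵥ Y *ᵥ B *ᵥ ζ = ζ ⬝ᵥ Bᵀ *ᵥ Y *ᵥ x := by
    rw [dotProduct_mulVec_comm_of_isSymm hYs, dotProduct_transpose_mulVec, dotProduct_comm]
  have decoupled : x ⬝ᵥ Y *ᵥ B *ᵥ Tᵀ *ᵥ (T * Tᵀ)⁻¹ *ᵥ C *ᵥ x =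
      T *ᵥ Bᵀ *ᵥ Y *ᵥ x ⬝ᵥ (T * Tᵀ)⁻¹ *ᵥ C *ᵥ x := by
    simpa [observerGain, ← mulVec_mulVec] using
      dotProduct_mulVec_observerGain_mulVec hYs hY 0 B C T x (C *ᵥ x)
  simp only [← mulVec_mulVec, kernelProjection_mulVec_dotProduct_kernelProjection_mulVec hT,
    dotProduct_kernelProjection_mulVec, sub_mulVec, mulVec_add, mulVec_sub, dotProduct_add,
    dotProduct_sub, add_dotProduct, dotProduct_mulVec_observerGain_mulVec hYs hY, plant_noise,
    decoupled, dotProduct_mulVec_comm_of_isSymm hPs (T *ᵥ ζ)]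
  ring

end Algebra

section Dissipation

variable {m n p : Type*} [Fintype m] [Fintype n] [Fintype p] [DecidableEq m] [DecidableEq n]
  {Y : Matrix n n ℝ}

theorem observer_dissipation [DecidableEq p] (hY : Y.PosDef) {c : ℝ} (hc : 0 ≤ c) (A : Matrix n n ℝ)
    (B : Matrix n p ℝ) (C : Matrix m n ℝ) {T : Matrix m p ℝ} (hT : (T * Tᵀ).PosDef)
    (x : n → ℝ) (ζ : p → ℝ) :
    2 * (x ⬝ᵥ Y *ᵥ ((A - observerGain c Y B C T * C) *ᵥ x
        + (B - observerGain c Y B C T * T) *ᵥ ζ)) ≤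
      2 * (x ⬝ᵥ Y *ᵥ (A - B * Tᵀ * (T * Tᵀ)⁻¹ * C) *ᵥ x)
        - c * (C *ᵥ x ⬝ᵥ (T * Tᵀ)⁻¹ *ᵥ C *ᵥ x)
        + 2 * (kernelProjection T *ᵥ ζ ⬝ᵥ (kernelProjection T * Bᵀ * Y) *ᵥ x)
        - c * (kernelProjection T *ᵥ ζ ⬝ᵥ kernelProjection T *ᵥ ζ) + c * (ζ ⬝ᵥ ζ) := by
  rw [observer_completion_of_squares (isHermitian_iff_isSymm.mp hY.isHermitian)
    hY.det_pos.ne'.isUnit c A B C hT.det_pos.ne'.isUnit]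
  exact sub_le_self _ (mul_nonneg hc (hT.inv.posSemidef.dotProduct_mulVec_nonneg _))

theorem consensus_dissipation (hY : Y.PosDef) {c : ℝ} (hc : 0 ≤ c) (H : Matrix m n ℝ)
    {G : Matrix m p ℝ} (hG : (G * Gᵀ).PosDef) (x z : n → ℝ) (w : p → ℝ) :
    2 * (x ⬝ᵥ Y *ᵥ observerGain c Y 0 H G *ᵥ (H *ᵥ (z - x) - G *ᵥ w)) ≤
      2 * (x ⬝ᵥ (c • (Hᵀ * (G * Gᵀ)⁻¹ * H)) *ᵥ z) - c * (H *ᵥ x ⬝ᵥ (G * Gᵀ)⁻¹ *ᵥ H *ᵥ x)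
        + c * (w ⬝ᵥ w) := by
  classical
  have hYs : Y.IsSymm := isHermitian_iff_isSymm.mp hY.isHermitian
  have neighbour : x ⬝ᵥ Y *ᵥ observerGain c Y 0 H G *ᵥ H *ᵥ z =
      x ⬝ᵥ (c • (Hᵀ * (G * Gᵀ)⁻¹ * H)) *ᵥ z := by
    simp [dotProduct_mulVec_observerGain_mulVec hYs hY.det_pos.ne'.isUnit, smul_mulVec,
      ← mulVec_mulVec, dotProduct_transpose_mulVec, dotProduct_comm (H *ᵥ x)]
  have own := observer_dissipation hY hc 0 0 H hG x w
  have hw : 0 ≤ kernelProjection G *ᵥ w ⬝ᵥ kernelProjection G *ᵥ w :=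
    dotProduct_self_star_nonneg _
  simp only [zero_sub, neg_mulVec, ← mulVec_mulVec, mulVec_add, mulVec_neg, dotProduct_add,
    dotProduct_neg, Matrix.zero_mul, transpose_zero, neg_zero, zero_mulVec, mulVec_zero,
    dotProduct_zero, Matrix.mul_zero] at own
  simp only [mulVec_sub, dotProduct_sub, neighbour]
  linarith [mul_nonneg hc hw]

end Dissipation

namespace NetData

variable {n N M l : ℕ} (nd : NetData n N M l)

/-- The input matrix `[B₂, 0]` of node `i`, acting on the combined noise `(ξ, ξ_i)`. -/
def noiseInput (i : Fin N) : Matrix (Fin n) (Fin l ⊕ Fin (nd.li i)) ℝ :=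
  fromCols nd.B2 0

/-- The measurement noise matrix `[D_i^k, D̄_i^k]`, acting on the combined noise `(ξ, ξ_i)`. -/
def noiseOutput (i : Fin N) (k : Fin M) : Matrix (Fin (nd.r i)) (Fin l ⊕ Fin (nd.li i)) ℝ :=
  fromCols (nd.D i k) (nd.Dbar i k)

/-- The weight `2δ_j / (q_j^k + 1)` of the storage function of node `j` in the LMI (18). -/
def decayRate (δ : Fin N → ℝ) (k : Fin M) (j : Fin N) : ℝ :=
  2 * δ j / ((nd.qdeg j k : ℝ) + 1)

/-- The block `Z_i^k` of the LMI (18), block diagonal over the neighbours of node `i`. -/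
def Zblk (δ : Fin N → ℝ) (X : Fin N → Fin M → Matrix (Fin n) (Fin n) ℝ) (i : Fin N) (k : Fin M) :
    Matrix ({j // j ∈ nd.V i k} × Fin n) ({j // j ∈ nd.V i k} × Fin n) ℝ :=
  of fun jc jc' => if jc.1 = jc'.1 then nd.decayRate δ k jc.1 * X jc.1 k jc.2 jc'.2 else 0

/-- The vector `(e_i, ζ, (e_j)_{j ∈ V_i^k})` at which the LMI (18) of node `i` is evaluated; `ζ`
collects the two noise blocks. -/
def lmiVector (i : Fin N) (k : Fin M) (e : Fin N → Fin n → ℝ) (ζ : Fin l ⊕ Fin (nd.li i) → ℝ) :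
    nd.idx i k → ℝ :=
  Sum.elim (e i) (Sum.elim (ζ ∘ Sum.inl) (Sum.elim (ζ ∘ Sum.inr) fun jc => e jc.1 jc.2))

theorem noiseOutput_mul_transpose (i : Fin N) (k : Fin M) :
    nd.noiseOutput i k * (nd.noiseOutput i k)ᵀ = nd.E i k := by
  rw [noiseOutput, transpose_fromCols, fromCols_mul_fromRows, E]

theorem noiseInput_mul_transpose_noiseOutput (i : Fin N) (k : Fin M) :
    nd.noiseInput i * (nd.noiseOutput i k)ᵀ = nd.B2 * (nd.D i k)ᵀ := by
  rw [noiseInput, noiseOutput, transpose_fromCols, fromCols_mul_fromRows, Matrix.zero_mul,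
    add_zero]

variable (γ : ℝ) (δ : Fin N → ℝ) (X : Fin N → Fin M → Matrix (Fin n) (Fin n) ℝ)

theorem Lgain_eq_observerGain (i : Fin N) (k : Fin M) :
    nd.Lgain γ X i k =
      observerGain (γ ^ 2) (X i k) (nd.noiseInput i) (nd.C i k) (nd.noiseOutput i k) := by
  rw [observerGain, noiseOutput_mul_transpose, noiseInput_mul_transpose_noiseOutput, Lgain]

theorem Kgain_eq_observerGain (i j : Fin N) (k : Fin M) :
    nd.Kgain γ X i j k = observerGain (γ ^ 2) (X i k) 0 (nd.H i j) (nd.G i j) := by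
  rw [observerGain, Matrix.zero_mul, add_zero, smul_mul, Kgain, F]

theorem fromRows_Nblk_Sblk (i : Fin N) (k : Fin M) :
    fromRows (nd.Nblk X i k) (nd.Sblk X i k) =
      kernelProjection (nd.noiseOutput i k) * (nd.noiseInput i)ᵀ * X i k := by
  have projected_input : kernelProjection (nd.noiseOutput i k) * (nd.noiseInput i)ᵀ =
      (nd.noiseInput i)ᵀ - (nd.noiseOutput i k)ᵀ * ((nd.E i k)⁻¹ * (nd.D i k * nd.B2ᵀ)) := by
    rw [kernelProjection, noiseOutput_mul_transpose, Matrix.sub_mul, Matrix.one_mul,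
      Matrix.mul_assoc, Matrix.mul_assoc, noiseInput, noiseOutput, transpose_fromCols,
      transpose_fromCols, fromCols_mul_fromRows, transpose_zero, Matrix.mul_zero, add_zero]
  rw [projected_input, noiseInput, noiseOutput, transpose_fromCols, transpose_fromCols,
    fromRows_mul, Matrix.sub_mul, fromRows_mul, fromRows_mul]
  ext (a | a) b <;> simp [Nblk, Sblk, Matrix.sub_mul, Matrix.mul_assoc]

theorem drift_eq (k : Fin M) (e : Fin N → Fin n → ℝ) (ξ : Fin l → ℝ)
    (ξl : (i : Fin N) → Fin (nd.li i) → ℝ) (w : (i j : Fin N) → Fin (nd.ss i j) → ℝ)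
    (i : Fin N) :
    nd.drift γ X k e ξ ξl w i =
      (nd.A - nd.Lgain γ X i k * nd.C i k) *ᵥ e i
        + (nd.noiseInput i - nd.Lgain γ X i k * nd.noiseOutput i k) *ᵥ Sum.elim ξ (ξl i)
        + ∑ j ∈ nd.V i k,
          nd.Kgain γ X i j k *ᵥ (nd.H i j *ᵥ (e j - e i) - nd.G i j *ᵥ w i j) := by
  have noise_eq : (nd.noiseInput i - nd.Lgain γ X i k * nd.noiseOutput i k) *ᵥ Sum.elim ξ (ξl i) =
      (nd.B2 - nd.Lgain γ X i k * nd.D i k) *ᵥ ξ - (nd.Lgain γ X i k * nd.Dbar i k) *ᵥ ξl i := by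
    simp only [noiseInput, noiseOutput, mul_fromCols, sub_mulVec, fromCols_mulVec_sumElim,
      zero_mulVec]
    abel
  rw [noise_eq, drift]
  abel

theorem bigMat_eq_fromBlocks (i : Fin N) (k : Fin M) :
    nd.bigMat γ δ X i k =
      fromBlocks (nd.Qbarblk γ δ X i k)
        (fromRows (nd.Nblk X i k) (fromRows (nd.Sblk X i k) (of (nd.xiBlk γ i k))ᵀ))ᵀ
        (fromRows (nd.Nblk X i k) (fromRows (nd.Sblk X i k) (of (nd.xiBlk γ i k))ᵀ))
        (fromBlocks (-γ ^ 2 • 1) 0 0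
          (fromBlocks (-γ ^ 2 • 1) 0 0 (-nd.Zblk δ X i k))) := by
  ext (a | a | a | a) (b | b | b | b) <;>
    simp [bigMat, Zblk, decayRate, one_apply, neg_ite]

theorem neighbours_dotProduct_xiBlk_mulVec (i : Fin N) (k : Fin M) (x : Fin n → ℝ)
    (e : Fin N → Fin n → ℝ) :
    (fun jc : {j // j ∈ nd.V i k} × Fin n => e jc.1 jc.2) ⬝ᵥ (of (nd.xiBlk γ i k))ᵀ *ᵥ x =
      ∑ j ∈ nd.V i k,
        (x ⬝ᵥ (γ ^ 2 • ((nd.H i j)ᵀ * (nd.F i j)⁻¹ * nd.H i j)) *ᵥ e j - x ⬝ᵥ e j) := by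
  rw [dotProduct_transpose_mulVec, ← Finset.sum_coe_sort]
  simp only [← dotProduct_sub, ← dotProduct_sum]
  congr 1
  ext a
  simp [mulVec, dotProduct, Fintype.sum_prod_type, xiBlk, sub_mul, Finset.sum_sub_distrib,
    one_apply]

theorem neighbours_dotProduct_Zblk_mulVec (i : Fin N) (k : Fin M) (e : Fin N → Fin n → ℝ) :
    (fun jc : {j // j ∈ nd.V i k} × Fin n => e jc.1 jc.2) ⬝ᵥ
        nd.Zblk δ X i k *ᵥ (fun jc => e jc.1 jc.2) =
      ∑ j ∈ nd.V i k, nd.decayRate δ k j * (e j ⬝ᵥ X j k *ᵥ e j) := by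
  rw [← Finset.sum_coe_sort]
  simp only [dotProduct, mulVec, Fintype.sum_prod_type, Zblk, of_apply, ite_mul, zero_mul]
  refine Finset.sum_congr rfl fun j _ => ?_
  rw [Finset.mul_sum]
  refine Finset.sum_congr rfl fun a _ => ?_
  rw [Finset.sum_eq_single j (fun j' _ hj => by simp [hj.symm]) (by simp)]
  simp only [if_true, Finset.mul_sum]
  exact Finset.sum_congr rfl fun b _ => by ring

theorem dotProduct_Qbarblk_mulVec {i : Fin N} {k : Fin M} (hX : (X i k).IsSymm) (x : Fin n → ℝ) :
    x ⬝ᵥ nd.Qbarblk γ δ X i k *ᵥ x =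
      2 * (x ⬝ᵥ X i k *ᵥ (nd.A - nd.B2 * (nd.D i k)ᵀ * (nd.E i k)⁻¹ * nd.C i k) *ᵥ x)
        + 2 * δ i * (x ⬝ᵥ X i k *ᵥ x) + ((nd.pdeg i k : ℝ) + nd.qdeg i k) * (x ⬝ᵥ x)
        + ∑ l', nd.Lam k l' * (x ⬝ᵥ X i l' *ᵥ x)
        - γ ^ 2 * (nd.C i k *ᵥ x ⬝ᵥ (nd.E i k)⁻¹ *ᵥ nd.C i k *ᵥ x)
        - ∑ j ∈ nd.V i k, γ ^ 2 * (nd.H i j *ᵥ x ⬝ᵥ (nd.F i j)⁻¹ *ᵥ nd.H i j *ᵥ x) := by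
  have lyapunov (U : Matrix (Fin n) (Fin n) ℝ) :
      x ⬝ᵥ (X i k * U + Uᵀ * X i k) *ᵥ x = 2 * (x ⬝ᵥ X i k *ᵥ U *ᵥ x) := by
    rw [add_mulVec, dotProduct_add, ← mulVec_mulVec, ← mulVec_mulVec, dotProduct_transpose_mulVec,
      dotProduct_mulVec_comm_of_isSymm hX x, dotProduct_comm (X i k *ᵥ x), two_mul]
  have gram {m : ℕ} (U : Matrix (Fin m) (Fin n) ℝ) (P : Matrix (Fin m) (Fin m) ℝ) :
      x ⬝ᵥ (Uᵀ * P * U) *ᵥ x = U *ᵥ x ⬝ᵥ P *ᵥ U *ᵥ x := by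
    rw [← mulVec_mulVec, ← mulVec_mulVec, dotProduct_transpose_mulVec, dotProduct_comm]
  have shift (W : Matrix (Fin n) (Fin n) ℝ) :
      x ⬝ᵥ X i k *ᵥ (nd.A + δ i • 1 - W) *ᵥ x =
        x ⬝ᵥ X i k *ᵥ (nd.A - W) *ᵥ x + δ i * (x ⬝ᵥ X i k *ᵥ x) := by
    rw [add_sub_right_comm, add_mulVec, smul_mulVec, one_mulVec, mulVec_add, mulVec_smul,
      dotProduct_add, dotProduct_smul, smul_eq_mul]
  rw [Qbarblk, sub_mulVec, sub_mulVec, add_mulVec, add_mulVec]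
  simp only [dotProduct_sub, dotProduct_add, lyapunov, shift, smul_mulVec, sum_mulVec, one_mulVec,
    dotProduct_smul, dotProduct_sum, gram, smul_eq_mul, Finset.mul_sum]
  ring

theorem lmiVector_dotProduct_bigMat_mulVec (i : Fin N) (k : Fin M) (e : Fin N → Fin n → ℝ)
    (ζ : Fin l ⊕ Fin (nd.li i) → ℝ) :
    nd.lmiVector i k e ζ ⬝ᵥ nd.bigMat γ δ X i k *ᵥ nd.lmiVector i k e ζ =
      e i ⬝ᵥ nd.Qbarblk γ δ X i k *ᵥ e i
        + 2 * (ζ ⬝ᵥ (kernelProjection (nd.noiseOutput i k) * (nd.noiseInput i)ᵀ * X i k) *ᵥ e i)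
        - γ ^ 2 * (ζ ⬝ᵥ ζ)
        + 2 * ∑ j ∈ nd.V i k,
          (e i ⬝ᵥ (γ ^ 2 • ((nd.H i j)ᵀ * (nd.F i j)⁻¹ * nd.H i j)) *ᵥ e j - e i ⬝ᵥ e j)
        - ∑ j ∈ nd.V i k, nd.decayRate δ k j * (e j ⬝ᵥ X j k *ᵥ e j) := by
  obtain ⟨u, v, rfl⟩ : ∃ u v, ζ = Sum.elim u v := ⟨_, _, (Sum.elim_comp_inl_inr ζ).symm⟩
  rw [bigMat_eq_fromBlocks, lmiVector, sumElim_dotProduct_fromBlocks_mulVec, ← fromRows_Nblk_Sblk,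
    ← neighbours_dotProduct_xiBlk_mulVec, ← neighbours_dotProduct_Zblk_mulVec]
  simp only [Sum.elim_comp_inl, Sum.elim_comp_inr, fromBlocks_mulVec, fromRows_mulVec,
    sumElim_dotProduct_sumElim, zero_mulVec, add_zero, zero_add, neg_mulVec, smul_mulVec,
    one_mulVec, dotProduct_neg, dotProduct_smul, smul_eq_mul]
  ring

variable {γ δ X}

theorem node_dissipation {i : Fin N} {k : Fin M} (hX : (X i k).PosDef) (hE : (nd.E i k).PosDef)
    (hF : ∀ j ∈ nd.V i k, (nd.F i j).PosDef) (hLMI : (-nd.bigMat γ δ X i k).PosSemidef)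
    (e : Fin N → Fin n → ℝ) (ξ : Fin l → ℝ) (ξl : (i : Fin N) → Fin (nd.li i) → ℝ)
    (w : (i j : Fin N) → Fin (nd.ss i j) → ℝ) :
    (((nd.pdeg i k : ℝ) + nd.qdeg i k) * (e i ⬝ᵥ e i) - 2 * ∑ j ∈ nd.V i k, e i ⬝ᵥ e j)
        + ((∑ l', nd.Lam k l' * (e i ⬝ᵥ X i l' *ᵥ e i))
          + 2 * (e i ⬝ᵥ X i k *ᵥ nd.drift γ X k e ξ ξl w i))
        + (2 * δ i * (e i ⬝ᵥ X i k *ᵥ e i)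
          - ∑ j ∈ nd.V i k, nd.decayRate δ k j * (e j ⬝ᵥ X j k *ᵥ e j)) ≤
      γ ^ 2 * (ξ ⬝ᵥ ξ + ξl i ⬝ᵥ ξl i + ∑ j ∈ nd.V i k, w i j ⬝ᵥ w i j) := by
  set ζ := Sum.elim ξ (ξl i) with hζ
  have lmi : nd.lmiVector i k e (kernelProjection (nd.noiseOutput i k) *ᵥ ζ) ⬝ᵥ
      nd.bigMat γ δ X i k *ᵥ
        nd.lmiVector i k e (kernelProjection (nd.noiseOutput i k) *ᵥ ζ) ≤ 0 := by
    simpa [neg_mulVec] using hLMI.dotProduct_mulVec_nonneg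
      (nd.lmiVector i k e (kernelProjection (nd.noiseOutput i k) *ᵥ ζ))
  have noise_norm : ζ ⬝ᵥ ζ = ξ ⬝ᵥ ξ + ξl i ⬝ᵥ ξl i := sumElim_dotProduct_sumElim ..
  have own := observer_dissipation hX (sq_nonneg γ) nd.A (nd.noiseInput i) (nd.C i k)
    (T := nd.noiseOutput i k) (by rwa [noiseOutput_mul_transpose]) (e i) ζ
  have links := Finset.sum_le_sum fun j hj =>
    consensus_dissipation hX (sq_nonneg γ) (nd.H i j) (G := nd.G i j) (hF j hj) (e i) (e j) (w i j)
  rw [lmiVector_dotProduct_bigMat_mulVec,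
    dotProduct_Qbarblk_mulVec _ _ _ _ (isHermitian_iff_isSymm.mp hX.isHermitian)] at lmi
  rw [← Lgain_eq_observerGain, noiseInput_mul_transpose_noiseOutput,
    noiseOutput_mul_transpose, noise_norm] at own
  simp only [← Kgain_eq_observerGain, ← F.eq_def, Finset.sum_add_distrib, Finset.sum_sub_distrib,
    ← Finset.mul_sum] at links lmi
  rw [drift_eq, ← hζ, mulVec_add, dotProduct_add, mulVec_sum, dotProduct_sum]
  linarith

theorem sum_sum_neighbours (k : Fin M) (f : Fin N → ℝ) :
    ∑ i, ∑ j ∈ nd.V i k, f j = ∑ j, (nd.qdeg j k : ℝ) * f j := by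
  rw [Finset.sum_comm' (t' := Finset.univ) (s' := fun j => Finset.univ.filter fun i => j ∈ nd.V i k)
    (by simp)]
  simp only [Finset.sum_const, nsmul_eq_mul, qdeg]

theorem card_mul_disagree [NeZero N] (k : Fin M) (e : Fin N → Fin n → ℝ) :
    (N : ℝ) * nd.disagree k e =
      ∑ i, (((nd.pdeg i k : ℝ) + nd.qdeg i k) * (e i ⬝ᵥ e i)
        - 2 * ∑ j ∈ nd.V i k, e i ⬝ᵥ e j) := by
  have norm_sub (i j : Fin N) : (e j - e i) ⬝ᵥ (e j - e i) =
      e j ⬝ᵥ e j + (e i ⬝ᵥ e i - 2 * (e i ⬝ᵥ e j)) := by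
    rw [sub_dotProduct, dotProduct_sub, dotProduct_sub, dotProduct_comm (e j) (e i)]
    ring
  rw [disagree, ← mul_assoc, mul_one_div_cancel (NeZero.ne (N : ℝ)), one_mul]
  simp only [norm_sub, Finset.sum_add_distrib, sum_sum_neighbours nd k fun j => e j ⬝ᵥ e j,
    Finset.sum_sub_distrib, Finset.sum_const, nsmul_eq_mul, ← Finset.mul_sum, pdeg, add_mul]
  ring

theorem sum_decayRate_mul (δ : Fin N → ℝ) (k : Fin M) (v : Fin N → ℝ) :
    ∑ i, nd.decayRate δ k i * v i =
      ∑ i, (2 * δ i * v i - ∑ j ∈ nd.V i k, nd.decayRate δ k j * v j) := by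
  rw [Finset.sum_sub_distrib, sum_sum_neighbours, ← Finset.sum_sub_distrib]
  refine Finset.sum_congr rfl fun i _ => ?_
  have : (nd.qdeg i k : ℝ) + 1 ≠ 0 := by positivity
  rw [decayRate]
  field_simp
  ring

end NetData

theorem stmt11_general {n N M l : ℕ} [NeZero N] (nd : NetData n N M l) {γ ε : ℝ} {δ : Fin N → ℝ}
    {X : Fin N → Fin M → Matrix (Fin n) (Fin n) ℝ} {k : Fin M}
    (hX : ∀ i, (X i k).PosDef) (hE : ∀ i, (nd.E i k).PosDef)
    (hF : ∀ i, ∀ j ∈ nd.V i k, (nd.F i j).PosDef)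
    (hLMI : ∀ i, (-nd.bigMat γ δ X i k).PosSemidef)
    (hε : ∀ i, ε ≤ 2 * δ i / ((nd.qdeg i k : ℝ) + 1))
    (e : Fin N → Fin n → ℝ) (ξ : Fin l → ℝ) (ξl : (i : Fin N) → Fin (nd.li i) → ℝ)
    (w : (i j : Fin N) → Fin (nd.ss i j) → ℝ) :
    (N : ℝ) * nd.disagree k e
        + ∑ i, ((∑ l', nd.Lam k l' * (e i ⬝ᵥ X i l' *ᵥ e i))
          + 2 * (e i ⬝ᵥ X i k *ᵥ nd.drift γ X k e ξ ξl w i)) ≤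
      -ε * ∑ i, e i ⬝ᵥ X i k *ᵥ e i
        + γ ^ 2 * ∑ i, (ξ ⬝ᵥ ξ + ξl i ⬝ᵥ ξl i + ∑ j ∈ nd.V i k, w i j ⬝ᵥ w i j) := by
  have network := Finset.sum_le_sum fun i (_ : i ∈ Finset.univ) =>
    nd.node_dissipation (hX i) (hE i) (hF i) (hLMI i) e ξ ξl w
  have decay : ε * ∑ i, e i ⬝ᵥ X i k *ᵥ e i ≤
      ∑ i, nd.decayRate δ k i * (e i ⬝ᵥ X i k *ᵥ e i) := by
    rw [Finset.mul_sum]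
    exact Finset.sum_le_sum fun i _ => mul_le_mul_of_nonneg_right (hε i)
      ((hX i).posSemidef.dotProduct_mulVec_nonneg (e i))
  rw [Finset.sum_add_distrib, Finset.sum_add_distrib, ← nd.card_mul_disagree,
    ← nd.sum_decayRate_mul, ← Finset.mul_sum] at network
  linarith

/-- under the LMI (18), the dissipation inequality for the
observer network with globally broadcast Markov state holds. -/
theorem stmt11 {n N M l : ℕ} [NeZero N] [NeZero M]
    (nd : NetData n N M l)
    (hself : ∀ i k, i ∉ nd.V i k)
    (γ : ℝ) (hγ : 0 < γ)
    (δ : Fin N → ℝ) (hδ : ∀ i, 0 < δ i)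
    (X : Fin N → Fin M → Matrix (Fin n) (Fin n) ℝ)
    (hX : ∀ i k, (X i k).PosDef)
    (hE : ∀ i k, (nd.E i k).PosDef)
    (hF : ∀ i k, ∀ j ∈ nd.V i k, (nd.F i j).PosDef)
    (hLamOff : ∀ k l', k ≠ l' → 0 ≤ nd.Lam k l')
    (hLamRow : ∀ k, ∑ l', nd.Lam k l' = 0)
    -- LMI (18): the big block matrix is negative definite
    (hLMI18 : ∀ i k, (-(nd.bigMat γ δ X i k)).PosDef) :
    ∀ (k : Fin M) (e : Fin N → Fin n → ℝ) (ξ : Fin l → ℝ)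
      (ξl : (i : Fin N) → Fin (nd.li i) → ℝ)
      (w : (i j : Fin N) → Fin (nd.ss i j) → ℝ),
      (N : ℝ) * nd.disagree k e
        + ∑ i, ((∑ l', nd.Lam k l' * (e i ⬝ᵥ (X i l' *ᵥ e i)))
            + 2 * (e i ⬝ᵥ (X i k *ᵥ nd.drift γ X k e ξ ξl w i)))
      ≤ -(Finset.univ.inf' Finset.univ_nonempty
            (fun ik : Fin N × Fin M =>
              2 * δ ik.1 / ((nd.qdeg ik.1 ik.2 : ℝ) + 1)))
          * ∑ i, e i ⬝ᵥ (X i k *ᵥ e i)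
        + γ ^ 2 * ∑ i, (ξ ⬝ᵥ ξ + ξl i ⬝ᵥ ξl i
            + ∑ j ∈ nd.V i k, w i j ⬝ᵥ w i j) := by
  intro k e ξ ξl w
  exact stmt11_general nd (hX · k) (hE · k) (hF · k) (fun i => (hLMI18 i k).posSemidef)
    (fun i => Finset.inf'_le _ (Finset.mem_univ (i, k))) e ξ ξl w
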